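/- arXiv:2206.13851 — 5 statements merged into one kernel-verified Lean document; each statement's English description precedes it below -/
import Mathlib

section
/- Let K ≥ 2 be a natural number and let a, b be natural numbers with b ≥ K^3 and K·b > a. Set a' := ⌊a/K⌋, b' := ⌈b/K⌉ and q := ⌊a'/b'⌋. Then (q : ℝ) ≤ (a : ℝ)/(b : ℝ) < q + 2; in particular the Euclidean quotient ⌊a/b⌋ equals q or q + 1. -/
/-!
Nested floors collapse, so `⌊⌊a/K⌋/⌈b/K⌉⌋ = ⌊a/d⌋` with `d = K⌈b/K⌉`, and `b ≤ d < b + K`.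
Replacing the divisor `b` by `d = b + e` lowers the quotient by `(a/b) · e/d`, which is less than
`1` because `a/b < K`, `e < K` and `K² ≤ b ≤ d`. Rounding down then costs less than `1` more.
-/

section NatCeil

variable {𝕜 : Type*} [Field 𝕜] [LinearOrder 𝕜] [IsStrictOrderedRing 𝕜] [FloorSemiring 𝕜] {k : 𝕜}

theorem le_mul_natCeil_div (x : 𝕜) (hk : 0 < k) : x ≤ k * ⌈x / k⌉₊ :=
  (div_le_iff₀' hk).1 (Nat.le_ceil _)

theorem mul_natCeil_div_lt_add {x : 𝕜} (hx : 0 ≤ x) (hk : 0 < k) : k * ⌈x / k⌉₊ < x + k := by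
  calc k * ⌈x / k⌉₊ < k * (x / k + 1) := by
        gcongr
        exact Nat.ceil_lt_add_one (div_nonneg hx hk.le)
    _ = x + k := by field_simp

end NatCeil

section NatDiv

variable {a b d e q K : ℕ}

theorem div_mul_le_of_le (hbd : b ≤ d) : a / d * b ≤ a :=
  (Nat.mul_le_mul_left _ hbd).trans (Nat.div_mul_le_self a d)

theorem lt_div_add_two_mul (hab : a < K * b) (he : K * e ≤ b) : a < (a / (b + e) + 2) * b := by
  have hb : 0 < b := Nat.pos_of_lt_mul_left hab
  have hq : a / (b + e) < K :=
    (Nat.div_le_div_left (Nat.le_add_right b e) hb).trans_lt ((Nat.div_lt_iff_lt_mul hb).2 hab)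
  calc a < (b + e) * (a / (b + e) + 1) := Nat.lt_mul_div_succ a (Nat.add_pos_left hb e)
    _ = (a / (b + e) + 1) * b + (a / (b + e) + 1) * e := by ring
    _ ≤ (a / (b + e) + 1) * b + K * e := by gcongr; exact hq
    _ ≤ (a / (b + e) + 1) * b + b := by gcongr
    _ = (a / (b + e) + 2) * b := by ring

theorem div_eq_or_eq_add_one (hle : q * b ≤ a) (hlt : a < (q + 2) * b) :
    a / b = q ∨ a / b = q + 1 := by
  have hb : 0 < b := Nat.pos_of_lt_mul_left hlt
  have hq : q ≤ a / b := (Nat.le_div_iff_mul_le hb).2 hle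
  have hq' : a / b < q + 2 := (Nat.div_lt_iff_lt_mul hb).2 hlt
  lia

end NatDiv

theorem stmt0_general (K a b : ℕ) (hb : K ^ 2 ≤ b) (hab : a < K * b) :
    let a' := a / K
    let b' := ⌈(b : ℚ) / (K : ℚ)⌉₊
    let q := a' / b'
    ((q : ℝ) ≤ (a : ℝ) / (b : ℝ) ∧ (a : ℝ) / (b : ℝ) < (q : ℝ) + 2) ∧
      (a / b = q ∨ a / b = q + 1) := by
  intro a' b' q
  have hK : 0 < K := Nat.pos_of_lt_mul_right hab
  have hb₀ : 0 < b := Nat.pos_of_lt_mul_left hab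
  have hKℚ : (0 : ℚ) < K := mod_cast hK
  have hbd : b ≤ K * b' := mod_cast le_mul_natCeil_div (b : ℚ) hKℚ
  have hdK : K * b' < b + K := mod_cast mul_natCeil_div_lt_add (b.cast_nonneg : (0 : ℚ) ≤ b) hKℚ
  obtain ⟨e, hd⟩ := Nat.exists_eq_add_of_le hbd
  have hq : q = a / (b + e) := by rw [← hd]; exact Nat.div_div_eq_div_mul a K b'
  have heb : K * e ≤ b := by
    calc K * e ≤ K * K := by gcongr; lia
      _ = K ^ 2 := (sq K).symm
      _ ≤ b := hb
  have hle : q * b ≤ a := hq ▸ div_mul_le_of_le (Nat.le_add_right b e)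
  have hlt : a < (q + 2) * b := hq ▸ lt_div_add_two_mul hab heb
  have hbℝ : (0 : ℝ) < b := mod_cast hb₀
  exact ⟨⟨(le_div_iff₀ hbℝ).2 (mod_cast hle), (div_lt_iff₀ hbℝ).2 (mod_cast hlt)⟩,
    div_eq_or_eq_add_one hle hlt⟩

/-- Lemma 4.2(1) (first "recursive" lemma, item 1): for `K ≥ 2`, `b ≥ K³` and `K·b > a`,
setting `a' := ⌊a/K⌋`, `b' := ⌈b/K⌉` and `q := ⌊a'/b'⌋`, we have `q ≤ a/b < q + 2`
(over the reals), hence `⌊a/b⌋ = q` or `⌊a/b⌋ = q + 1`. -/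
theorem stmt0 (K a b : ℕ) (hK : 2 ≤ K) (hb : K ^ 3 ≤ b) (hab : a < K * b) :
    let a' := a / K
    let b' := ⌈(b : ℚ) / (K : ℚ)⌉₊
    let q := a' / b'
    ((q : ℝ) ≤ (a : ℝ) / (b : ℝ) ∧ (a : ℝ) / (b : ℝ) < (q : ℝ) + 2) ∧
      (a / b = q ∨ a / b = q + 1) :=
  stmt0_general K a b ((Nat.pow_le_pow_right (by lia) (by simp)).trans hb) hab
end

section
/- For every real number a ≥ 0 and every integer c ≥ 1, one has (a + 1)^c + 1 ≤ (a + (c+1)/c)^c. -/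
lemma pow_add_mul_le_add_pow_of_one_le {R : Type*} [CommSemiring R] [PartialOrder R]
    [IsOrderedRing R] {x y : R} (hx : 1 ≤ x) (hy : 0 ≤ y) (n : ℕ) :
    x ^ n + n * y ≤ (x + y) ^ n := by
  have hx₀ : 0 ≤ x := zero_le_one.trans hx
  have le_pow_mul : (n : R) ≤ n * x ^ (n - 1) :=
    le_mul_of_one_le_right n.cast_nonneg (one_le_pow₀ hx)
  calc
    x ^ n + n * y ≤ x ^ n + n * x ^ (n - 1) * y := by gcongr
    _ ≤ (x + y) ^ n :=
      pow_add_mul_le_add_pow_of_sq_nonneg hx₀ (pow_nonneg hy 2) (pow_nonneg (add_nonneg hx₀ hy) 2)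
        (add_nonneg (mul_nonneg zero_le_two hx₀) hy) n

theorem stmt7_general {K : Type*} [Semifield K] [LinearOrder K] [IsStrictOrderedRing K]
    {a : K} (ha : 0 ≤ a) {c : ℕ} (hc : 1 ≤ c) :
    (a + 1) ^ c + 1 ≤ (a + ((c : K) + 1) / (c : K)) ^ c := by
  have hc₀ : (c : K) ≠ 0 := Nat.cast_ne_zero.mpr (Nat.one_le_iff_ne_zero.mp hc)
  calc
    (a + 1) ^ c + 1 = (a + 1) ^ c + c * (1 / c) := by rw [mul_one_div_cancel hc₀]
    _ ≤ (a + 1 + 1 / c) ^ c :=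
      pow_add_mul_le_add_pow_of_one_le (le_add_of_nonneg_left ha) (by positivity) c
    _ = (a + (c + 1) / c) ^ c := by rw [add_assoc, add_div, div_self hc₀]

/-- For every real `a ≥ 0` and every integer `c ≥ 1`:
`(a + 1)^c + 1 ≤ (a + (c+1)/c)^c`. -/
theorem stmt7 (a : ℝ) (ha : 0 ≤ a) (c : ℕ) (hc : 1 ≤ c) :
    (a + 1) ^ c + 1 ≤ (a + ((c : ℝ) + 1) / (c : ℝ)) ^ c :=
  stmt7_general ha hc
end

section
/- Let d ≥ 1 be a natural number and let λ, L be natural numbers with λ² > d²·L. Let y be a natural number with λ ≤ y ≤ L which is not of the form p·q for a prime number p and a natural number q ≤ d. Then y has a divisor y₁ with d < y₁ < λ. -/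
/-!
Let `m` be the least divisor of `y` exceeding `d`, so every proper divisor of `m` is at most `d`,
and let `c = y / m`. If `c > d`, then `c` competes with `m` in the minimality, so `m ≤ c` and
`m² ≤ y < λ²`. If `c ≤ d`, then `m` cannot be prime, so it is a product of two proper divisors and
`m ≤ d² < λ`.
-/

section LeastDivisor

variable {d m y : ℕ}

theorem exists_isLeast_dvd_gt (hdy : d < y) : ∃ m, IsLeast {k | k ∣ y ∧ d < k} m :=
  ⟨_, isLeast_csInf ⟨y, dvd_rfl, hdy⟩⟩

theorem le_of_dvd_of_lt_isLeast (hm : IsLeast {k | k ∣ y ∧ d < k} m) {k : ℕ}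
    (hkm : k ∣ m) (hlt : k < m) : k ≤ d := by
  by_contra! hdk
  exact hlt.not_ge (hm.2 ⟨hkm.trans hm.1.1, hdk⟩)

theorem le_sq_of_isLeast_of_not_prime (hm : IsLeast {k | k ∣ y ∧ d < k} m)
    (hm2 : 2 ≤ m) (hprime : ¬ m.Prime) : m ≤ d ^ 2 := by
  obtain ⟨a, b, ha, hb, rfl⟩ := (Nat.not_prime_iff_exists_mul_eq hm2).1 hprime
  calc
    a * b ≤ d * d := Nat.mul_le_mul
      (le_of_dvd_of_lt_isLeast hm (dvd_mul_right a b) ha)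
      (le_of_dvd_of_lt_isLeast hm (dvd_mul_left b a) hb)
    _ = d ^ 2 := (sq d).symm

theorem sq_le_of_isLeast_of_lt_cofactor {c : ℕ}
    (hm : IsLeast {k | k ∣ m * c ∧ d < k} m) (hdc : d < c) : m ^ 2 ≤ m * c := by
  rw [sq]
  exact Nat.mul_le_mul_left m (hm.2 ⟨dvd_mul_left c m, hdc⟩)

end LeastDivisor

theorem lt_of_mul_lt_sq_of_le {R : Type*} [MonoidWithZero R] [Preorder R] [PosMulMono R]
    [MulPosReflectLT R] {a b c : R} (ha : 0 ≤ a) (hb : 0 ≤ b) (hbc : b ≤ c)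
    (h : a * c < b ^ 2) : a < b := by
  refine lt_of_mul_lt_mul_right ?_ hb
  calc
    a * b ≤ a * c := mul_le_mul_of_nonneg_left hbc ha
    _ < b * b := by rwa [← sq]

theorem stmt12_general {d lam y : ℕ} (hdlam : d ^ 2 < lam) (hdy : d < y) (hylam : y < lam ^ 2)
    (hform : ¬ ∃ p q : ℕ, p.Prime ∧ q ≤ d ∧ y = p * q) :
    ∃ y₁ : ℕ, y₁ ∣ y ∧ d < y₁ ∧ y₁ < lam := by
  obtain ⟨m, hm⟩ := exists_isLeast_dvd_gt hdy
  obtain ⟨hmy, hdm⟩ := hm.1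
  refine ⟨m, hmy, hdm, ?_⟩
  obtain ⟨c, rfl⟩ := hmy
  rcases lt_or_ge d c with hdc | hcd
  · exact lt_of_pow_lt_pow_left₀ 2 lam.zero_le
      ((sq_le_of_isLeast_of_lt_cofactor hm hdc).trans_lt hylam)
  · have hprime : ¬ m.Prime := fun hp ↦ hform ⟨m, c, hp, hcd, rfl⟩
    have hc : 0 < c := Nat.pos_of_mul_pos_left (Nat.zero_lt_of_lt hdy)
    have hm2 : 2 ≤ m := by lia
    exact (le_sq_of_isLeast_of_not_prime hm hm2 hprime).trans_lt hdlam

/-- Lemma on the "forbidden form": for `d ≥ 1`, `λ² > d²·L`, and `λ ≤ y ≤ L` such that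
`y` is not of the form `p·q` with `p` prime and `q ≤ d`, there is a divisor `y₁` of `y`
with `d < y₁ < λ`. -/
theorem stmt12 (d lam L y : ℕ) (hd : 1 ≤ d) (hlam : d ^ 2 * L < lam ^ 2)
    (hy1 : lam ≤ y) (hy2 : y ≤ L)
    (hform : ¬ ∃ p q : ℕ, p.Prime ∧ q ≤ d ∧ y = p * q) :
    ∃ y₁ : ℕ, y₁ ∣ y ∧ d < y₁ ∧ y₁ < lam := by
  have hdlam : d ^ 2 < lam := lt_of_mul_lt_sq_of_le (Nat.zero_le _) lam.zero_le (hy1.trans hy2) hlam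
  exact stmt12_general hdlam (((Nat.le_self_pow two_ne_zero d).trans_lt hdlam).trans_le hy1)
    ((hy2.trans (Nat.le_mul_of_pos_left L (Nat.pow_pos hd))).trans_lt hlam) hform
end

section
/- Let K, A, B, a, b, m, n be natural numbers with K ≥ 2, A > B ≥ 1, m ≥ n, a > b ≥ 1, a·K^m ≤ A < (a+1)·K^m, b·K^n ≤ B < (b+1)·K^n, and suppose (a : ℝ)/(b·(b+1)) + 1/b ≤ 1. Then, letting q₀ := ⌊a/(b+1)⌋, there exists q ∈ {q₀, q₀ + 1} with q ≥ 1 such that (q : ℝ)·K^(m−n) ≤ (A : ℝ)/(B : ℝ) < (q+1)·K^(m−n); consequently, writing R := A − B·q·K^(m−n), one has R < B·K^(m−n) and ⌊A/B⌋ = q·K^(m−n) + ⌊R/B⌋. -/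
/-! The digit bounds place `A / (B·K^(m-n))` in the interval `[a/(b+1), (a+1)/b)`, whose length is
`a/(b(b+1)) + 1/b ≤ 1`. Its floor is therefore `⌊a/(b+1)⌋` or `⌊a/(b+1)⌋ + 1`, and this floor is
the required `q`. -/

section Floor

variable {R : Type*} [Semiring R] [LinearOrder R] [IsStrictOrderedRing R] [FloorSemiring R]

theorem natFloor_eq_or_eq_add_one {x y : R} (hy : 0 ≤ y) (hyx : y ≤ x) (hxy : x ≤ y + 1) :
    ⌊x⌋₊ = ⌊y⌋₊ ∨ ⌊x⌋₊ = ⌊y⌋₊ + 1 := by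
  have lower : ⌊y⌋₊ ≤ ⌊x⌋₊ := Nat.floor_mono hyx
  have upper : ⌊x⌋₊ ≤ ⌊y⌋₊ + 1 := (Nat.floor_mono hxy).trans_eq (Nat.floor_add_one hy)
  omega

end Floor

section LeadingDigits

variable {𝕜 : Type*} [Field 𝕜] [LinearOrder 𝕜] [IsStrictOrderedRing 𝕜]

theorem add_one_div_eq_div_add_one_add {a b : 𝕜} (hb : 0 < b) :
    (a + 1) / b = a / (b + 1) + (a / (b * (b + 1)) + 1 / b) := by
  field_simp
  ring

theorem div_add_one_le_div_of_mul_le {a b s x y : 𝕜} (ha : 0 ≤ a) (hs : 0 < s) (hy : 0 < y)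
    (hx : a * s ≤ x) (hys : y ≤ (b + 1) * s) : a / (b + 1) ≤ x / y := by
  calc a / (b + 1) = a * s / ((b + 1) * s) := (mul_div_mul_right _ _ hs.ne').symm
    _ ≤ x / y := div_le_div₀ ((mul_nonneg ha hs.le).trans hx) hx hy hys

theorem div_le_add_one_div_of_le_mul {a b s x y : 𝕜} (ha : 0 ≤ a) (hb : 0 < b) (hs : 0 < s)
    (hx : x ≤ (a + 1) * s) (hys : b * s ≤ y) : x / y ≤ (a + 1) / b := by
  calc x / y ≤ (a + 1) * s / (b * s) := div_le_div₀ (by positivity) hx (by positivity) hys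
    _ = (a + 1) / b := mul_div_mul_right _ _ hs.ne'

variable [FloorSemiring 𝕜]

theorem natDiv_eq_or_eq_add_one_of_leading_digits {A B a b s : ℕ} (hb : 0 < b) (hs : 0 < s)
    (hA : a * s ≤ A) (hA' : A ≤ (a + 1) * s) (hB : b * s ≤ B) (hB' : B ≤ (b + 1) * s)
    (hgap : (a : 𝕜) / (b * (b + 1)) + 1 / b ≤ 1) :
    A / B = a / (b + 1) ∨ A / B = a / (b + 1) + 1 := by
  have hb₀ : (0 : 𝕜) < b := mod_cast hb
  have hs₀ : (0 : 𝕜) < s := mod_cast hs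
  have hB₀ : (0 : 𝕜) < B := mod_cast (Nat.mul_pos hb hs).trans_le hB
  have lower : (a : 𝕜) / (b + 1) ≤ A / B :=
    div_add_one_le_div_of_mul_le a.cast_nonneg hs₀ hB₀ (mod_cast hA) (mod_cast hB')
  have upper : (A : 𝕜) / B ≤ a / (b + 1) + 1 := by
    calc (A : 𝕜) / B ≤ (a + 1) / b :=
          div_le_add_one_div_of_le_mul a.cast_nonneg hb₀ hs₀ (mod_cast hA') (mod_cast hB)
      _ = a / (b + 1) + (a / (b * (b + 1)) + 1 / b) := add_one_div_eq_div_add_one_add hb₀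
      _ ≤ a / (b + 1) + 1 := by gcongr
  have floor_cases := natFloor_eq_or_eq_add_one (by positivity) lower upper
  rwa [← Nat.cast_add_one, Nat.floor_div_eq_div, Nat.floor_div_eq_div] at floor_cases

theorem natCast_le_natCast_div_iff {k A B : ℕ} : (k : 𝕜) ≤ (A : 𝕜) / B ↔ k ≤ A / B := by
  rw [← Nat.floor_div_eq_div (K := 𝕜), Nat.le_floor_iff (by positivity)]

theorem natCast_div_lt_natCast_iff {k A B : ℕ} : (A : 𝕜) / B < k ↔ A / B < k := by
  simpa only [not_le] using natCast_le_natCast_div_iff.not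

end LeadingDigits

theorem sub_mul_natDiv_mul_lt (A : ℕ) {B M : ℕ} (hB : 0 < B) (hM : 0 < M) :
    A - B * (A / (B * M)) * M < B * M := by
  rw [mul_right_comm, ← Nat.mod_eq_sub_mul_div]
  exact Nat.mod_lt A (Nat.mul_pos hB hM)

theorem natDiv_eq_add_sub_mul_div {A B k : ℕ} (hk : k ≤ A / B) :
    A / B = k + (A - B * k) / B := by
  rw [Nat.sub_mul_div, Nat.add_sub_cancel' hk]

/-- Appendix division lemma: under the stated hypotheses on `K, A, B, a, b, m, n`,
with `q₀ := ⌊a/(b+1)⌋` there is `q ∈ {q₀, q₀+1}`, `q ≥ 1`, with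
`q·K^(m−n) ≤ A/B < (q+1)·K^(m−n)` over the reals; consequently, for
`R := A − B·q·K^(m−n)` one has `R < B·K^(m−n)` and `⌊A/B⌋ = q·K^(m−n) + ⌊R/B⌋`. -/
theorem stmt13 (K A B a b m n : ℕ) (hK : 2 ≤ K) (hBA : B < A) (hB : 1 ≤ B)
    (hmn : n ≤ m) (hba : b < a) (hb : 1 ≤ b)
    (hA1 : a * K ^ m ≤ A) (hA2 : A < (a + 1) * K ^ m)
    (hB1 : b * K ^ n ≤ B) (hB2 : B < (b + 1) * K ^ n)
    (hfrac : (a : ℝ) / ((b : ℝ) * ((b : ℝ) + 1)) + 1 / (b : ℝ) ≤ 1) :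
    ∃ q : ℕ, (q = a / (b + 1) ∨ q = a / (b + 1) + 1) ∧ 1 ≤ q ∧
      (q : ℝ) * (K : ℝ) ^ (m - n) ≤ (A : ℝ) / (B : ℝ) ∧
      (A : ℝ) / (B : ℝ) < ((q : ℝ) + 1) * (K : ℝ) ^ (m - n) ∧
      A - B * q * K ^ (m - n) < B * K ^ (m - n) ∧
      A / B = q * K ^ (m - n) + (A - B * q * K ^ (m - n)) / B := by
  have hM : 0 < K ^ (m - n) := by positivity
  have scale : K ^ n * K ^ (m - n) = K ^ m := pow_mul_pow_sub K hmn
  have digits : A / (B * K ^ (m - n)) = a / (b + 1) ∨ A / (B * K ^ (m - n)) = a / (b + 1) + 1 := by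
    refine natDiv_eq_or_eq_add_one_of_leading_digits hb (by positivity) hA1 hA2.le ?_ ?_ hfrac
    · simpa only [mul_assoc, scale] using Nat.mul_le_mul_right (K ^ (m - n)) hB1
    · simpa only [mul_assoc, scale] using Nat.mul_le_mul_right (K ^ (m - n)) hB2.le
  have digit_pos : 0 < a / (b + 1) := Nat.div_pos hba b.succ_pos
  have lower : A / (B * K ^ (m - n)) * K ^ (m - n) ≤ A / B := by
    rw [← Nat.div_div_eq_div_mul]
    exact Nat.div_mul_le_self _ _
  have upper : A / B < (A / (B * K ^ (m - n)) + 1) * K ^ (m - n) := by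
    rw [← Nat.div_div_eq_div_mul]
    exact (Nat.div_lt_iff_lt_mul hM).1 (Nat.lt_succ_self _)
  refine ⟨A / (B * K ^ (m - n)), digits, by omega, mod_cast natCast_le_natCast_div_iff.2 lower,
    mod_cast natCast_div_lt_natCast_iff.2 upper, sub_mul_natDiv_mul_lt A hB hM, ?_⟩
  rw [mul_assoc B]
  exact natDiv_eq_add_sub_mul_div lower
end

section
/- Let i, j be positive integers and K ≥ 2 a natural number. Then i < 2·j holds if and only if for all natural numbers a, b with K^i ≤ a < K^(i+1) and K^j ≤ b < K^(j+1), one has (a : ℝ)/(b·(b+1)) + 1/b ≤ 1. -/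
section Semifield

variable {α : Type*} [Semifield α] [LinearOrder α] [IsStrictOrderedRing α]

theorem div_mul_add_one_add_one_div_le_one_iff {x y : α} (hy : 0 < y) :
    x / (y * (y + 1)) + 1 / y ≤ 1 ↔ x + 1 ≤ y ^ 2 := by
  have common_denom : x / (y * (y + 1)) + 1 / y = (x + 1 + y) / (y * (y + 1)) := by
    field_simp
    ring
  have denom_expand : y * (y + 1) = y ^ 2 + y := by ring
  rw [common_denom, div_le_one₀ (by positivity), denom_expand, add_le_add_iff_right]

-- Integrality of `a` enters here: for real `a`, `a < b ^ 2` would not give `a + 1 ≤ b ^ 2`.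
theorem natCast_div_mul_add_one_add_one_div_le_one_iff {a b : ℕ} (hb : 0 < b) :
    (a : α) / (b * (b + 1)) + 1 / b ≤ 1 ↔ a < b ^ 2 := by
  rw [div_mul_add_one_add_one_div_le_one_iff (Nat.cast_pos.2 hb), ← Nat.add_one_le_iff]
  exact_mod_cast Iff.rfl

end Semifield

theorem lt_mul_iff_forall_lt_pow {K : ℕ} (hK : 1 < K) (i j n : ℕ) :
    i < n * j ↔
      ∀ a b : ℕ, K ^ i ≤ a → a < K ^ (i + 1) → K ^ j ≤ b → b < K ^ (j + 1) → a < b ^ n := by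
  have pow_lt_pow_succ (m : ℕ) : K ^ m < K ^ (m + 1) := Nat.pow_lt_pow_succ hK
  constructor
  · intro hij a b _ ha hb _
    calc
      a < K ^ (i + 1) := ha
      _ ≤ K ^ (n * j) := Nat.pow_le_pow_right hK.le hij
      _ = (K ^ j) ^ n := pow_mul' K n j
      _ ≤ b ^ n := Nat.pow_le_pow_left hb n
  · intro h
    have least : K ^ i < (K ^ j) ^ n :=
      h _ _ le_rfl (pow_lt_pow_succ i) le_rfl (pow_lt_pow_succ j)
    rwa [← pow_mul', Nat.pow_lt_pow_iff_right hK] at least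

/-- Lemma characterizing when the division trick applies: for positive integers `i, j`
and `K ≥ 2`, `i < 2·j` iff for all naturals `a ∈ [Kⁱ, Kⁱ⁺¹)` and `b ∈ [Kʲ, Kʲ⁺¹)`,
`a/(b·(b+1)) + 1/b ≤ 1` over the reals. -/
theorem stmt14 (i j K : ℕ) (hi : 1 ≤ i) (hj : 1 ≤ j) (hK : 2 ≤ K) :
    i < 2 * j ↔
      ∀ a b : ℕ, K ^ i ≤ a → a < K ^ (i + 1) → K ^ j ≤ b → b < K ^ (j + 1) →
        (a : ℝ) / ((b : ℝ) * ((b : ℝ) + 1)) + 1 / (b : ℝ) ≤ 1 := by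
  rw [lt_mul_iff_forall_lt_pow hK]
  refine forall₅_congr fun a b _ _ hb ↦ imp_congr_right fun _ ↦ ?_
  have b_pos : 0 < b := (Nat.pow_pos (Nat.zero_lt_of_lt hK)).trans_le hb
  exact (natCast_div_mul_add_one_add_one_div_le_one_iff b_pos).symm
end
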